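/- The cyclic equivalence class of Γ^(3) is uniquely determined by Γ: if Γ is a tropical curve and Γ^(3), Γ'^(3) are two tropical curves obtained from Γ by the Γ^(3)-construction (with possibly different choices of the surviving edge in each C1-set), then Γ^(3) and Γ'^(3) are cyclically equivalent. -/

import Mathlib

/-- A finite multigraph: finite vertex and edge types, each edge carrying a source and a
target vertex (this is an auxiliary orientation); loops and parallel edges are allowed. -/
structure Multigraph where
  V : Type
  E : Type
  [fV : Fintype V]
  [fE : Fintype E]
  [dV : DecidableEq V]
  [dE : DecidableEq E]
  s : E → V
  t : E → V

attribute [instance] Multigraph.fV Multigraph.fE Multigraph.dV Multigraph.dE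

namespace Multigraph

variable (G : Multigraph)

/-- Two vertices are adjacent if some edge joins them. -/
def Adj (a b : G.V) : Prop :=
  ∃ e : G.E, (G.s e = a ∧ G.t e = b) ∨ (G.s e = b ∧ G.t e = a)

/-- A multigraph is connected if it is nonempty and any two vertices are joined by a walk. -/
def Connected : Prop :=
  Nonempty G.V ∧ ∀ a b : G.V, Relation.ReflTransGen G.Adj a b

/-- The graph obtained by deleting the edges in `F` is connected. -/
def ConnectedAvoiding (F : Set G.E) : Prop :=
  ∀ a b : G.V, Relation.ReflTransGen
    (fun x y => ∃ e : G.E, e ∉ F ∧ ((G.s e = x ∧ G.t e = y) ∨ (G.s e = y ∧ G.t e = x))) a b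

/-- The valency of a vertex: the number of half-edges at it (a loop counts twice). -/
def val (v : G.V) : ℕ :=
  (Finset.univ.filter (fun e => G.s e = v)).card + (Finset.univ.filter (fun e => G.t e = v)).card

/-- The number of loops based at a vertex. -/
def loops (v : G.V) : ℕ :=
  (Finset.univ.filter (fun e => G.s e = v ∧ G.t e = v)).card

/-- The number of edges joining two vertices. -/
def edgesBetween (v w : G.V) : ℕ :=
  (Finset.univ.filter (fun e => (G.s e = v ∧ G.t e = w) ∨ (G.s e = w ∧ G.t e = v))).card

/-- The first Betti number `b₁(G) = |E| - |V| + 1` (of a connected graph). -/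
def b1 : ℤ := (Fintype.card G.E : ℤ) - (Fintype.card G.V : ℤ) + 1

/-- The boundary map `∂ : C₁(G,ℤ) → C₀(G,ℤ)`, sending an edge `e` to `t e - s e`. -/
def boundaryHom : (G.E → ℤ) →+ (G.V → ℤ) where
  toFun c := fun v =>
    ∑ e : G.E, c e * ((if G.t e = v then 1 else 0) - (if G.s e = v then 1 else 0))
  map_zero' := by funext v; simp
  map_add' a b := by
    funext v
    simp [Pi.add_apply, add_mul, Finset.sum_add_distrib]

/-- The coboundary map `δ : C₀(G,ℤ) → C₁(G,ℤ)`. -/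
def coboundaryHom : (G.V → ℤ) →+ (G.E → ℤ) where
  toFun f := fun e => f (G.t e) - f (G.s e)
  map_zero' := by funext e; simp
  map_add' a b := by funext e; simp only [Pi.add_apply]; ring

/-- The cycle space `H₁(G,ℤ)`, i.e. the kernel of the boundary map. -/
def cycleSpace : AddSubgroup (G.E → ℤ) := (G.boundaryHom).ker

/-- `C` is the edge set of a closed walk with no repeated vertices except the
initial/terminal one (so a loop is a cycle). -/
def IsCycle (C : Finset G.E) : Prop :=
  ∃ n : ℕ, 0 < n ∧ ∃ (e : Fin n → G.E) (v : Fin (n + 1) → G.V),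
    Function.Injective e ∧
    (∀ i : Fin n, (G.s (e i) = v i.castSucc ∧ G.t (e i) = v i.succ) ∨
        (G.s (e i) = v i.succ ∧ G.t (e i) = v i.castSucc)) ∧
    v 0 = v (Fin.last n) ∧
    (∀ i j : Fin (n + 1), v i = v j →
        i = j ∨ (i = 0 ∧ j = Fin.last n) ∨ (i = Fin.last n ∧ j = 0)) ∧
    C = Finset.image e Finset.univ

/-- A bridge (separating edge) is an edge contained in no cycle. -/
def IsBridge (e : G.E) : Prop := ∀ C : Finset G.E, G.IsCycle C → e ∉ C

def Bridgeless : Prop := ∀ e : G.E, ¬ G.IsBridge e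

/-- `e₁ ∼ e₂` iff every cycle containing `e₁` contains `e₂` and conversely. -/
def Sim (e₁ e₂ : G.E) : Prop :=
  ∀ C : Finset G.E, G.IsCycle C → (e₁ ∈ C ↔ e₂ ∈ C)

/-- The C1-sets: the equivalence classes of the relation `Sim`. -/
def IsC1Set (S : Set G.E) : Prop := ∃ e : G.E, S = {e' | G.Sim e e'}

/-- The multigraph obtained by contracting every edge in `F` (a contracted loop is
simply deleted). -/
noncomputable def contractSet (F : Set G.E) : Multigraph :=
  letI : DecidableEq (Quot (fun a b : G.V => ∃ e ∈ F, G.s e = a ∧ G.t e = b)) :=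
    Classical.decEq _
  { V := Quot (fun a b : G.V => ∃ e ∈ F, G.s e = a ∧ G.t e = b)
    E := {e : G.E // e ∉ F}
    fV := Fintype.ofSurjective (Quot.mk _) (fun q => Quot.exists_rep q)
    fE := Fintype.ofInjective (Subtype.val) Subtype.val_injective
    dV := inferInstance
    dE := inferInstance
    s := fun e => Quot.mk _ (G.s e.1)
    t := fun e => Quot.mk _ (G.t e.1) }

/-- `G^(2)`: the multigraph obtained from `G` by contracting every bridge. -/
noncomputable def contractBridges : Multigraph := G.contractSet {e | G.IsBridge e}

/-- An isomorphism of multigraphs. -/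
structure Iso (G₁ G₂ : Multigraph) where
  vEquiv : G₁.V ≃ G₂.V
  eEquiv : G₁.E ≃ G₂.E
  endpoints : ∀ e : G₁.E,
    (G₂.s (eEquiv e) = vEquiv (G₁.s e) ∧ G₂.t (eEquiv e) = vEquiv (G₁.t e)) ∨
    (G₂.s (eEquiv e) = vEquiv (G₁.t e) ∧ G₂.t (eEquiv e) = vEquiv (G₁.s e))

/-- The group of degree-zero divisors `Div⁰(G)`. -/
def Div0 : AddSubgroup (G.V → ℤ) where
  carrier := {D : G.V → ℤ | ∑ v : G.V, D v = 0}
  zero_mem' := by simp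
  add_mem' := by
    intro a b ha hb
    simp only [Set.mem_setOf_eq, Pi.add_apply] at *
    simp [Finset.sum_add_distrib, ha, hb]
  neg_mem' := by
    intro a ha
    simp only [Set.mem_setOf_eq, Pi.neg_apply] at *
    simp [ha]

/-- The principal divisor `div(f_v)` associated to a vertex `v`. -/
def prinDiv (v : G.V) : G.V → ℤ :=
  fun u => if u = v then 2 * (G.loops v : ℤ) - (G.val v : ℤ) else (G.edgesBetween v u : ℤ)

/-- The group of principal divisors `Prin(G)`. -/
def Prin : AddSubgroup (G.V → ℤ) := AddSubgroup.closure (Set.range G.prinDiv)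

end Multigraph

/-- `Jac(G₁) ≅ Jac(G₂)`: a ℤ-linear isomorphism of the cycle lattices preserving the
bilinear forms for which the edges are orthonormal. -/
def JacIsoGraph (G₁ G₂ : Multigraph) : Prop :=
  ∃ φ : G₁.cycleSpace ≃+ G₂.cycleSpace,
    ∀ x y : G₁.cycleSpace,
      (∑ e : G₂.E, ((φ x : G₂.E → ℤ) e) * ((φ y : G₂.E → ℤ) e)) =
      ∑ e : G₁.E, ((x : G₁.E → ℤ) e) * ((y : G₁.E → ℤ) e)

/-- Cyclic equivalence of two multigraphs: a bijection of the edge sets, together with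
signs, inducing an isomorphism of the cycle spaces. -/
def CyclicallyEquivalent (G₁ G₂ : Multigraph) : Prop :=
  ∃ (σ : G₁.E ≃ G₂.E) (ε : G₁.E → ℤ),
    (∀ e, ε e = 1 ∨ ε e = -1) ∧
    ((fun x : G₁.E → ℤ => fun e₂ : G₂.E => ε (σ.symm e₂) * x (σ.symm e₂)) ''
        (G₁.cycleSpace : Set (G₁.E → ℤ))) = (G₂.cycleSpace : Set (G₂.E → ℤ))

/-- Cyclic equivalence of metric graphs: as for graphs, with a length-preserving bijection
of the edge sets. -/
def MetricCycEquiv (G₁ : Multigraph) (ℓ₁ : G₁.E → ℝ) (G₂ : Multigraph) (ℓ₂ : G₂.E → ℝ) : Prop :=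
  ∃ (σ : G₁.E ≃ G₂.E) (ε : G₁.E → ℤ),
    (∀ e, ℓ₂ (σ e) = ℓ₁ e) ∧
    (∀ e, ε e = 1 ∨ ε e = -1) ∧
    ((fun x : G₁.E → ℤ => fun e₂ : G₂.E => ε (σ.symm e₂) * x (σ.symm e₂)) ''
        (G₁.cycleSpace : Set (G₁.E → ℤ))) = (G₂.cycleSpace : Set (G₂.E → ℤ))

/-- `c` chooses one representative edge in each C1-set (i.e. in each `Sim`-class). -/
def IsC1Choice (H : Multigraph) (c : H.E → H.E) : Prop :=
  (∀ e, H.Sim e (c e)) ∧ ∀ e e' : H.E, H.Sim e e' → c e = c e'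

/-- The graph `G^(3)` obtained by contracting, in each C1-set, all edges except the
chosen one. -/
noncomputable def threeGraph (H : Multigraph) (c : H.E → H.E) : Multigraph :=
  H.contractSet {e | c e ≠ e}

/-- The length function on `G^(3)`: a surviving edge gets the total length of its C1-set. -/
noncomputable def threeLength (H : Multigraph) (ℓ : H.E → ℝ) (c : H.E → H.E) :
    (threeGraph H c).E → ℝ :=
  fun e => ∑ e' ∈ Finset.univ.filter (fun e' => c e' = e.1), ℓ e'

/-- A weighted graph: a multigraph with a weight function on the vertices. -/
structure WeightedGraph where
  G : Multigraph
  w : G.V → ℕ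

namespace WeightedGraph

/-- The genus `g(G,w) = b₁(G) + Σ_v w(v)`. -/
def genus (X : WeightedGraph) : ℤ := X.G.b1 + ∑ v : X.G.V, (X.w v : ℤ)

/-- A weighted graph is stable if it is connected, has genus at least 2, and every
vertex of weight zero has valency at least 3. -/
def Stable (X : WeightedGraph) : Prop :=
  X.G.Connected ∧ 2 ≤ X.genus ∧ ∀ v : X.G.V, X.w v = 0 → 3 ≤ X.G.val v

/-- An isomorphism of weighted graphs. -/
structure Iso (X Y : WeightedGraph) where
  vEquiv : X.G.V ≃ Y.G.V
  eEquiv : X.G.E ≃ Y.G.E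
  endpoints : ∀ e : X.G.E,
    (Y.G.s (eEquiv e) = vEquiv (X.G.s e) ∧ Y.G.t (eEquiv e) = vEquiv (X.G.t e)) ∨
    (Y.G.s (eEquiv e) = vEquiv (X.G.t e) ∧ Y.G.t (eEquiv e) = vEquiv (X.G.s e))
  weight_eq : ∀ v : X.G.V, Y.w (vEquiv v) = X.w v

/-- Contraction of a single edge of a weighted graph: a non-loop edge is contracted by
identifying its two endpoints, the new vertex receiving the sum of the two weights;
a loop is deleted, the weight of its base vertex increasing by 1. -/
noncomputable def contract (X : WeightedGraph) (e₀ : X.G.E) : WeightedGraph :=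
  letI : DecidableEq (Quot (fun a b : X.G.V => a = X.G.s e₀ ∧ b = X.G.t e₀)) :=
    Classical.decEq _
  { G := { V := Quot (fun a b : X.G.V => a = X.G.s e₀ ∧ b = X.G.t e₀)
           E := {e : X.G.E // e ≠ e₀}
           fV := Fintype.ofSurjective (Quot.mk _) (fun q => Quot.exists_rep q)
           fE := inferInstance
           dV := inferInstance
           dE := inferInstance
           s := fun e => Quot.mk _ (X.G.s e.1)
           t := fun e => Quot.mk _ (X.G.t e.1) }
    w := fun q =>
      (∑ v ∈ Finset.univ.filter
          (fun v => Quot.mk (fun a b : X.G.V => a = X.G.s e₀ ∧ b = X.G.t e₀) v = q), X.w v) +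
      (if X.G.s e₀ = X.G.t e₀ ∧
          Quot.mk (fun a b : X.G.V => a = X.G.s e₀ ∧ b = X.G.t e₀) (X.G.s e₀) = q
       then 1 else 0) }

/-- One step: `Y` is (isomorphic to) the contraction of a single edge of `X`. -/
def ContractStep (X Y : WeightedGraph) : Prop :=
  ∃ e : X.G.E, Nonempty ((X.contract e).Iso Y)

/-- `X.ContractsTo Y`: `Y` is obtained from `X` by contracting finitely many edges. -/
def ContractsTo : WeightedGraph → WeightedGraph → Prop :=
  Relation.ReflTransGen ContractStep

/-- A sequence of exactly `n` loop contractions from `X` ending at (a graph isomorphic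
to) `Y`. -/
def LoopContractSeq : ℕ → WeightedGraph → WeightedGraph → Prop
  | 0, X, Y => Nonempty (X.Iso Y)
  | n + 1, X, Y => ∃ e : X.G.E, X.G.s e = X.G.t e ∧ LoopContractSeq n (X.contract e) Y

/-- The weightless graph `G''` obtained by replacing each vertex `v` of positive weight
with a weight-zero vertex carrying `w v` new loops. -/
def blowUp (X : WeightedGraph) : WeightedGraph where
  G := { V := X.G.V
         E := X.G.E ⊕ (Σ v : X.G.V, Fin (X.w v))
         fV := inferInstance
         fE := inferInstance
         dV := inferInstance
         dE := inferInstance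
         s := Sum.elim X.G.s (fun p => p.1)
         t := Sum.elim X.G.t (fun p => p.1) }
  w := fun _ => 0

def totalWeight (X : WeightedGraph) : ℕ := ∑ v : X.G.V, X.w v

/-- The lattice `Λ = H₁(G,ℤ) ⊕ ℤ^(g - b₁(G))` underlying the Jacobian torus of a
weighted graph. -/
abbrev JacLattice (X : WeightedGraph) : Type :=
  ↥X.G.cycleSpace × (Fin X.totalWeight → ℤ)

/-- The bilinear form on the Jacobian lattice: on `H₁(G,ℤ)` the edges are orthonormal,
and the form vanishes on the extra summand. -/
def jacForm (X : WeightedGraph) (p q : X.JacLattice) : ℤ :=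
  ∑ e : X.G.E, (p.1 : X.G.E → ℤ) e * (q.1 : X.G.E → ℤ) e

end WeightedGraph

/-- A pure tropical curve: a multigraph with positive edge lengths. -/
structure PureTropicalCurve where
  G : Multigraph
  ℓ : G.E → ℝ
  pos : ∀ e, 0 < ℓ e

/-- A (weighted) tropical curve: a multigraph with vertex weights and positive edge
lengths. -/
structure TropicalCurve where
  G : Multigraph
  w : G.V → ℕ
  ℓ : G.E → ℝ
  pos : ∀ e, 0 < ℓ e

namespace TropicalCurve

def totalWeight (Γ : TropicalCurve) : ℕ := ∑ v : Γ.G.V, Γ.w v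

/-- The lattice `Λ = H₁(G,ℤ) ⊕ ℤ^(g - b₁(G))` underlying `Jac(Γ)`. -/
abbrev JacLattice (Γ : TropicalCurve) : Type :=
  ↥Γ.G.cycleSpace × (Fin Γ.totalWeight → ℤ)

/-- The bilinear form `( , )_ℓ` on the Jacobian lattice, vanishing on the extra
summand. -/
noncomputable def jacForm (Γ : TropicalCurve) (p q : Γ.JacLattice) : ℝ :=
  ∑ e : Γ.G.E, Γ.ℓ e * ((p.1 : Γ.G.E → ℤ) e : ℝ) * ((q.1 : Γ.G.E → ℤ) e : ℝ)

end TropicalCurve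

/-- `Jac(Γ₁) ≅ Jac(Γ₂)`: a ℤ-linear isomorphism of the lattices preserving the bilinear
forms. -/
def TropJacIso (Γ₁ Γ₂ : TropicalCurve) : Prop :=
  ∃ φ : Γ₁.JacLattice ≃+ Γ₂.JacLattice,
    ∀ p q : Γ₁.JacLattice, Γ₂.jacForm (φ p) (φ q) = Γ₁.jacForm p q

/-!
The integral cycles of a contraction are the restrictions of the integral cycles of the graph. Two
edges of a C1-set have proportional coordinates on the cycle space, with ratio `±1`: a simple cycle
through both gives an integral cycle `y` with coordinates `±1` there, and the combination of `y` and
an integral cycle `x` that vanishes at one of the two edges also vanishes at the other, because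
every edge in the support of an integral cycle lies on a simple cycle inside that support. So
replacing one surviving edge by another only changes coordinates of the cycle space by signs.
-/

theorem injective_consecutive_pairs {α : Type*} {n : ℕ} {w : Fin (n + 1) → α}
    (hw : Function.Injective w) :
    Function.Injective fun i : Fin n => s(w i.castSucc, w i.succ) := by
  intro i j hij
  rcases Sym2.eq_iff.mp hij with ⟨h, -⟩ | ⟨h, h'⟩
  · exact Fin.castSucc_injective n (hw h)
  · have h₁ := Fin.ext_iff.mp (hw h)
    have h₂ := Fin.ext_iff.mp (hw h')
    simp only [Fin.val_castSucc, Fin.val_succ] at h₁ h₂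
    omega

namespace Multigraph

variable {G : Multigraph}

theorem sum_boundaryHom_smul {A : Type*} [AddCommGroup A] (x : G.E → ℤ) (f : G.V → A) :
    ∑ v, G.boundaryHom x v • f v = ∑ e, x e • (f (G.t e) - f (G.s e)) := by
  simp only [boundaryHom, AddMonoidHom.coe_mk, ZeroHom.coe_mk, Finset.sum_smul]
  rw [Finset.sum_comm]
  simp only [mul_smul, sub_smul, ite_smul, one_smul, zero_smul, ← Finset.smul_sum,
    Finset.sum_sub_distrib, Finset.sum_ite_eq, Finset.mem_univ, if_true]

theorem sum_smul_sub_eq_zero {A : Type*} [AddCommGroup A] {x : G.E → ℤ}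
    (hx : x ∈ G.cycleSpace) (f : G.V → A) : ∑ e, x e • (f (G.t e) - f (G.s e)) = 0 := by
  simp [← sum_boundaryHom_smul, AddMonoidHom.mem_ker.mp hx]

theorem mem_cycleSpace_of_forall_sum_eq_zero {x : G.E → ℤ}
    (hx : ∀ f : G.V → ℤ, ∑ e, x e • (f (G.t e) - f (G.s e)) = 0) : x ∈ G.cycleSpace :=
  AddMonoidHom.mem_ker.mpr <| funext fun v => hx fun w => if w = v then 1 else 0

theorem apply_eq_zero_of_unique_crossing {x : G.E → ℤ} (hx : x ∈ G.cycleSpace) {e₀ : G.E}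
    (U : Set G.V) (hU : ∀ e ≠ e₀, x e ≠ 0 → (G.s e ∈ U ↔ G.t e ∈ U))
    (hs : G.s e₀ ∉ U) (ht : G.t e₀ ∈ U) : x e₀ = 0 := by
  classical
  have hsum := sum_smul_sub_eq_zero hx fun v => if v ∈ U then (1 : ℤ) else 0
  rw [Finset.sum_eq_single e₀ _ (by simp)] at hsum
  · simpa [hs, ht] using hsum
  · intro e _ hne
    by_cases hxe : x e = 0
    · simp [hxe]
    · simp [hU e hne hxe]

/-- The unordered pair of endpoints of an edge, which forgets the auxiliary orientation. -/
def ends (e : G.E) : Sym2 G.V := s(G.s e, G.t e)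

/-- The simple graph on the vertices of `G` underlying the subgraph with edge set `F`. Loops are
dropped and parallel edges merged, so that it has the same connected components. -/
def simpleGraphOn (F : Set G.E) : SimpleGraph G.V := SimpleGraph.fromEdgeSet (ends '' F)

theorem simpleGraphOn_adj {F : Set G.E} {a b : G.V} :
    (simpleGraphOn F).Adj a b ↔ (∃ e ∈ F, ends e = s(a, b)) ∧ a ≠ b :=
  SimpleGraph.fromEdgeSet_adj _

theorem simpleGraphOn_reachable {F : Set G.E} {e : G.E} (he : e ∈ F) :
    (simpleGraphOn F).Reachable (G.s e) (G.t e) := by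
  by_cases hst : G.s e = G.t e
  · rw [hst]
  · exact (simpleGraphOn_adj.mpr ⟨⟨e, he, rfl⟩, hst⟩).reachable

theorem reachable_of_apply_ne_zero {x : G.E → ℤ} (hx : x ∈ G.cycleSpace) {e₀ : G.E}
    (he₀ : x e₀ ≠ 0) :
    (simpleGraphOn {e | e ≠ e₀ ∧ x e ≠ 0}).Reachable (G.t e₀) (G.s e₀) := by
  by_contra hs
  refine he₀ <| apply_eq_zero_of_unique_crossing hx
    {v | (simpleGraphOn {e | e ≠ e₀ ∧ x e ≠ 0}).Reachable (G.t e₀) v}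
    (fun e hne hxe => ?_) hs (SimpleGraph.Reachable.refl _)
  have hst := simpleGraphOn_reachable (F := {e | e ≠ e₀ ∧ x e ≠ 0}) ⟨hne, hxe⟩
  exact ⟨fun h => h.trans hst, fun h => h.trans hst.symm⟩

theorem isCycle_insert_image {n : ℕ} {w : Fin (n + 1) → G.V} (hw : Function.Injective w)
    {g : Fin n → G.E} (hg : ∀ i, ends (g i) = s(w i.castSucc, w i.succ))
    {e₀ : G.E} (he₀ : ends e₀ = s(w (Fin.last n), w 0)) (hg₀ : e₀ ∉ Set.range g) :
    G.IsCycle (insert e₀ (Finset.univ.image g)) := by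
  have hginj : Function.Injective g := fun i j hij =>
    injective_consecutive_pairs hw <| by simp only [← hg, hij]
  refine ⟨n + 1, n.succ_pos, Fin.cons e₀ g, Fin.cons (w (Fin.last n)) w,
    Fin.cons_injective_iff.mpr ⟨hg₀, hginj⟩, fun i => ?_, rfl, fun i j hij => ?_, ?_⟩
  · cases i using Fin.cases with
    | zero => exact Sym2.eq_iff.mp he₀
    | succ i => exact Sym2.eq_iff.mp (hg i)
  · cases i using Fin.cases with
    | zero =>
      cases j using Fin.cases with
      | zero => exact Or.inl rfl
      | succ j => exact Or.inr (Or.inl ⟨rfl, congrArg Fin.succ (hw hij).symm⟩)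
    | succ i =>
      cases j using Fin.cases with
      | zero => exact Or.inr (Or.inr ⟨congrArg Fin.succ (hw hij), rfl⟩)
      | succ j => exact Or.inl (congrArg Fin.succ (hw hij))
  · ext e
    simp [Fin.exists_fin_succ, eq_comm]

theorem exists_isCycle_of_reachable {F : Set G.E} {e₀ : G.E} (he₀ : e₀ ∉ F)
    (h : (simpleGraphOn F).Reachable (G.t e₀) (G.s e₀)) :
    ∃ C : Finset G.E, G.IsCycle C ∧ e₀ ∈ C ∧ ∀ e ∈ C, e = e₀ ∨ e ∈ F := by
  obtain ⟨p, hp⟩ := h.exists_isPath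
  let w : Fin (p.length + 1) → G.V := fun i => p.getVert i
  have hw : Function.Injective w := fun i j hij =>
    Fin.ext <| hp.getVert_injOn (Nat.lt_succ_iff.mp i.2) (Nat.lt_succ_iff.mp j.2) hij
  have hedge (i : Fin p.length) : ∃ e ∈ F, ends e = s(w i.castSucc, w i.succ) :=
    (simpleGraphOn_adj.mp (p.adj_getVert_succ i.2)).1
  choose g hgF hg using hedge
  have he₀w : ends e₀ = s(w (Fin.last _), w 0) := by simp [w, ends]
  refine ⟨insert e₀ (Finset.univ.image g), isCycle_insert_image hw hg he₀w ?_,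
    Finset.mem_insert_self _ _, ?_⟩
  · rintro ⟨i, hi⟩
    exact he₀ (hi ▸ hgF i)
  · simp +contextual [or_imp, hgF]

theorem exists_isCycle_of_apply_ne_zero {x : G.E → ℤ} (hx : x ∈ G.cycleSpace) {e₀ : G.E}
    (he₀ : x e₀ ≠ 0) : ∃ C : Finset G.E, G.IsCycle C ∧ e₀ ∈ C ∧ ∀ e ∈ C, x e ≠ 0 := by
  obtain ⟨C, hC, heC, hsub⟩ := exists_isCycle_of_reachable (fun h => h.1 rfl)
    (reachable_of_apply_ne_zero hx he₀)
  refine ⟨C, hC, heC, fun e he => ?_⟩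
  rcases hsub e he with rfl | h
  exacts [he₀, h.2]

theorem exists_sign_of_ends_eq {e : G.E} {a b : G.V} (h : ends e = s(a, b)) :
    ∃ ε : ℤ, (ε = 1 ∨ ε = -1) ∧
      ∀ f : G.V → ℤ, ε * (f (G.t e) - f (G.s e)) = f b - f a := by
  rcases Sym2.eq_iff.mp h with ⟨rfl, rfl⟩ | ⟨rfl, rfl⟩
  · exact ⟨1, Or.inl rfl, fun f => by ring⟩
  · exact ⟨-1, Or.inr rfl, fun f => by ring⟩

theorem IsCycle.exists_mem_cycleSpace {C : Finset G.E} (hC : G.IsCycle C) :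
    ∃ y ∈ G.cycleSpace, ∀ e ∈ C, y e = 1 ∨ y e = -1 := by
  obtain ⟨n, -, c, w, hinj, hinc, hclosed, -, rfl⟩ := hC
  choose ε hε hεf using fun i => exists_sign_of_ends_eq (Sym2.eq_iff.mpr (hinc i))
  refine ⟨∑ i, Pi.single (c i) (ε i), mem_cycleSpace_of_forall_sum_eq_zero fun f => ?_, ?_⟩
  · calc ∑ e, (∑ i, Pi.single (c i) (ε i) : G.E → ℤ) e • (f (G.t e) - f (G.s e))
        = ∑ i, ε i * (f (G.t (c i)) - f (G.s (c i))) := by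
          simp only [Finset.sum_apply, Finset.sum_smul]
          rw [Finset.sum_comm]
          simp [Pi.single_apply]
      _ = ∑ i : Fin n, (f (w i.succ) - f (w i.castSucc)) := by simp only [hεf]
      _ = f (w (Fin.last n)) - f (w 0) := by
          rw [Finset.sum_sub_distrib]
          linarith [Fin.sum_univ_succ fun i => f (w i), Fin.sum_univ_castSucc fun i => f (w i)]
      _ = 0 := by rw [hclosed, sub_self]
  · simpa [Finset.sum_apply, Pi.single_apply, hinj.eq_iff] using hε

theorem IsBridge.apply_eq_zero {e : G.E} (he : G.IsBridge e) {x : G.E → ℤ}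
    (hx : x ∈ G.cycleSpace) : x e = 0 := by
  by_contra hne
  obtain ⟨C, hC, heC, -⟩ := exists_isCycle_of_apply_ne_zero hx hne
  exact he C hC heC

theorem Sim.symm {e e' : G.E} (h : G.Sim e e') : G.Sim e' e := fun C hC => (h C hC).symm

theorem Sim.trans {e e' e'' : G.E} (h : G.Sim e e') (h' : G.Sim e' e'') : G.Sim e e'' :=
  fun C hC => (h C hC).trans (h' C hC)

theorem Sim.apply_eq_zero {e e' : G.E} (h : G.Sim e e') {x : G.E → ℤ} (hx : x ∈ G.cycleSpace)
    (hxe : x e = 0) : x e' = 0 := by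
  by_contra hne
  obtain ⟨C, hC, he', hsupp⟩ := exists_isCycle_of_apply_ne_zero hx hne
  exact hsupp e ((h C hC).mpr he') hxe

theorem Sim.apply_mul_apply_comm {e e' : G.E} (h : G.Sim e e') {x y : G.E → ℤ}
    (hx : x ∈ G.cycleSpace) (hy : y ∈ G.cycleSpace) : x e' * y e = x e * y e' := by
  have hz : y e • x - x e • y ∈ G.cycleSpace :=
    sub_mem (zsmul_mem hx _) (zsmul_mem hy _)
  have hze' := h.apply_eq_zero hz (by simp [mul_comm])
  simp only [Pi.sub_apply, Pi.smul_apply, smul_eq_mul] at hze'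
  linear_combination hze'

theorem Sim.exists_sign {e e' : G.E} (h : G.Sim e e') :
    ∃ ε : ℤ, (ε = 1 ∨ ε = -1) ∧ ∀ x ∈ G.cycleSpace, x e' = ε * x e := by
  by_cases hb : G.IsBridge e
  · refine ⟨1, Or.inl rfl, fun x hx => ?_⟩
    rw [h.apply_eq_zero hx (hb.apply_eq_zero hx), hb.apply_eq_zero hx, mul_zero]
  · obtain ⟨C, hC, he⟩ : ∃ C, G.IsCycle C ∧ e ∈ C := by simpa [IsBridge] using hb
    obtain ⟨y, hy, hyC⟩ := hC.exists_mem_cycleSpace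
    have hcomm (x) (hx : x ∈ G.cycleSpace) := h.apply_mul_apply_comm hx hy
    rcases hyC e he with hye | hye <;> rcases hyC e' ((h C hC).mp he) with hye' | hye' <;>
      simp only [hye, hye'] at hcomm
    · exact ⟨1, Or.inl rfl, fun x hx => by linarith [hcomm x hx]⟩
    · exact ⟨-1, Or.inr rfl, fun x hx => by linarith [hcomm x hx]⟩
    · exact ⟨-1, Or.inr rfl, fun x hx => by linarith [hcomm x hx]⟩
    · exact ⟨1, Or.inl rfl, fun x hx => by linarith [hcomm x hx]⟩

theorem contractSet_sum_smul_sub {A : Type*} [AddCommGroup A] {F : Set G.E} (x : G.E → ℤ)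
    (f : (G.contractSet F).V → A) :
    ∑ e : (G.contractSet F).E,
        x e.1 • (f ((G.contractSet F).t e) - f ((G.contractSet F).s e)) =
      ∑ e, x e • (f (Quot.mk _ (G.t e)) - f (Quot.mk _ (G.s e))) := by
  refine Finset.sum_of_injOn Subtype.val Subtype.val_injective.injOn
    (fun _ _ => Finset.mem_coe.mpr (Finset.mem_univ _)) (fun e _ he => ?_) fun _ _ => rfl
  have heF : e ∈ F := not_not.mp fun hn =>
    he ⟨⟨e, hn⟩, Finset.mem_coe.mpr (Finset.mem_univ _), rfl⟩
  have hq : (Quot.mk _ (G.s e) : (G.contractSet F).V) = Quot.mk _ (G.t e) :=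
    Quot.sound ⟨e, heF, rfl, rfl⟩
  rw [hq, sub_self, smul_zero]

theorem boundaryHom_single (e : G.E) :
    G.boundaryHom (Pi.single e 1) = Pi.single (G.t e) 1 - Pi.single (G.s e) 1 := by
  ext v
  simp [boundaryHom, Pi.single_apply, eq_comm]

/-- The integral chains of `G` supported on the edge set `F`. -/
def chainsOn (F : Set G.E) : AddSubgroup (G.E → ℤ) := AddSubgroup.pi Fᶜ fun _ => ⊥

theorem mem_chainsOn {F : Set G.E} {z : G.E → ℤ} : z ∈ chainsOn F ↔ ∀ e ∉ F, z e = 0 :=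
  Iff.rfl

-- Modulo boundaries of chains on `F`, the vertex classes `[v]` depend only on the image of `v` in
-- the contraction, so the cycle pairs to zero with `v ↦ [v]`; that pairing is the class of `∂ x`.
theorem boundaryHom_mem_map_chainsOn {F : Set G.E} {x : G.E → ℤ}
    (hx : (fun e : (G.contractSet F).E => x e.1) ∈ (G.contractSet F).cycleSpace) :
    G.boundaryHom x ∈ (chainsOn F).map G.boundaryHom := by
  set B := (chainsOn F).map G.boundaryHom
  let π := QuotientAddGroup.mk' B
  have hπ (e) (he : e ∈ F) : π (Pi.single (G.s e) 1) = π (Pi.single (G.t e) 1) := by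
    refine QuotientAddGroup.eq.mpr ⟨Pi.single e 1, mem_chainsOn.mpr fun e' he' => ?_, ?_⟩
    · exact Pi.single_eq_of_ne (ne_of_mem_of_not_mem he he').symm _
    · rw [boundaryHom_single]
      abel
  let f : (G.contractSet F).V → (G.V → ℤ) ⧸ B :=
    Quot.lift (fun v => π (Pi.single v 1)) <| by
      rintro _ _ ⟨e, he, rfl, rfl⟩
      exact hπ e he
  rw [← QuotientAddGroup.eq_zero_iff]
  calc π (G.boundaryHom x)
      = ∑ v, G.boundaryHom x v • π (Pi.single v 1) := by
        simp only [← map_zsmul, ← map_sum, ← Pi.single_smul, smul_eq_mul, mul_one,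
          Finset.univ_sum_single]
    _ = ∑ e, x e • (π (Pi.single (G.t e) 1) - π (Pi.single (G.s e) 1)) :=
        sum_boundaryHom_smul x _
    _ = 0 := (contractSet_sum_smul_sub x f).symm.trans (sum_smul_sub_eq_zero hx f)

theorem coe_cycleSpace_contractSet (F : Set G.E) :
    ((G.contractSet F).cycleSpace : Set ((G.contractSet F).E → ℤ)) =
      (fun x e => x e.1) '' (G.cycleSpace : Set (G.E → ℤ)) := by
  classical
  refine Set.Subset.antisymm (fun y hy => ?_) ?_
  · let x : G.E → ℤ := fun e => if he : e ∉ F then y ⟨e, he⟩ else 0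
    have hxy : (fun e : (G.contractSet F).E => x e.1) = y := funext fun e => dif_pos e.2
    obtain ⟨z, hz, hzx⟩ := boundaryHom_mem_map_chainsOn (hxy.symm ▸ hy)
    refine ⟨x - z, AddMonoidHom.mem_ker.mpr (by rw [map_sub, hzx, sub_self]), ?_⟩
    funext e
    simpa [mem_chainsOn.mp hz e.1 e.2] using congrFun hxy e
  · rintro _ ⟨x, hx, rfl⟩
    exact mem_cycleSpace_of_forall_sum_eq_zero fun f =>
      (contractSet_sum_smul_sub x f).trans (sum_smul_sub_eq_zero hx fun v => f (Quot.mk _ v))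

end Multigraph

theorem threeGraph_apply_val {H : Multigraph} {c : H.E → H.E} (e : (threeGraph H c).E) :
    c e.1 = e.1 :=
  not_not.mp e.2

namespace IsC1Choice

variable {H : Multigraph} {c c₁ c₂ : H.E → H.E}

theorem apply_eq_iff (h : IsC1Choice H c) {e e' : H.E} : c e = c e' ↔ H.Sim e e' :=
  ⟨fun he => (h.1 e).trans (he ▸ (h.1 e').symm), h.2 e e'⟩

theorem apply_apply (h₁ : IsC1Choice H c₁) (h₂ : IsC1Choice H c₂) (e : H.E) :
    c₁ (c₂ e) = c₁ e :=
  h₁.2 _ _ (h₂.1 e).symm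

/-- The bijection between the surviving edges of two choices, matching those of the same C1-set. -/
def edgeEquiv (h₁ : IsC1Choice H c₁) (h₂ : IsC1Choice H c₂) :
    (threeGraph H c₁).E ≃ (threeGraph H c₂).E where
  toFun e := ⟨c₂ e.1, not_not.mpr (h₂.apply_apply h₂ _)⟩
  invFun e := ⟨c₁ e.1, not_not.mpr (h₁.apply_apply h₁ _)⟩
  left_inv e := Subtype.ext ((h₁.apply_apply h₂ _).trans (threeGraph_apply_val e))
  right_inv e := Subtype.ext ((h₂.apply_apply h₁ _).trans (threeGraph_apply_val e))

theorem threeLength_edgeEquiv (h₁ : IsC1Choice H c₁) (h₂ : IsC1Choice H c₂) (ℓ : H.E → ℝ)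
    (e : (threeGraph H c₁).E) :
    threeLength H ℓ c₂ (h₁.edgeEquiv h₂ e) = threeLength H ℓ c₁ e := by
  refine Finset.sum_congr (Finset.filter_congr fun e' _ => ?_) fun _ _ => rfl
  calc c₂ e' = c₂ e.1 ↔ c₁ e' = c₁ e.1 := h₂.apply_eq_iff.trans h₁.apply_eq_iff.symm
    _ ↔ c₁ e' = e.1 := by rw [threeGraph_apply_val e]

end IsC1Choice

theorem three_construction_well_defined_general {H : Multigraph} (ℓ : H.E → ℝ)
    {c₁ c₂ : H.E → H.E} (h₁ : IsC1Choice H c₁) (h₂ : IsC1Choice H c₂) :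
    MetricCycEquiv (threeGraph H c₁) (threeLength H ℓ c₁)
      (threeGraph H c₂) (threeLength H ℓ c₂) := by
  choose ε hε hsign using fun e => (h₂.1 e).exists_sign
  refine ⟨h₁.edgeEquiv h₂, fun e => ε e.1, h₁.threeLength_edgeEquiv h₂ ℓ, fun e => hε e.1, ?_⟩
  have hval (x) (hx : x ∈ H.cycleSpace) (e : (threeGraph H c₂).E) :
      ε (c₁ e.1) * x (c₁ e.1) = x e.1 := by
    rw [← hsign _ x hx, h₂.apply_apply h₁, threeGraph_apply_val e]
  unfold threeGraph
  rw [Multigraph.coe_cycleSpace_contractSet, Multigraph.coe_cycleSpace_contractSet,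
    Set.image_image]
  exact Set.image_congr fun x hx => funext fun e => hval x hx e

/-- The cyclic equivalence class of `Γ^(3)` is uniquely determined by `Γ`:
any two tropical curves obtained from `Γ` by the `Γ^(3)`-construction (with possibly
different choices of surviving edges in the C1-sets) are cyclically equivalent. -/
theorem three_construction_well_defined (Γ : TropicalCurve) (h : Γ.G.Connected)
    (c₁ c₂ : Γ.G.contractBridges.E → Γ.G.contractBridges.E)
    (h₁ : IsC1Choice Γ.G.contractBridges c₁) (h₂ : IsC1Choice Γ.G.contractBridges c₂) :
    MetricCycEquiv
      (threeGraph Γ.G.contractBridges c₁)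
      (threeLength Γ.G.contractBridges (fun e => Γ.ℓ e.1) c₁)
      (threeGraph Γ.G.contractBridges c₂)
      (threeLength Γ.G.contractBridges (fun e => Γ.ℓ e.1) c₂) :=
  three_construction_well_defined_general _ h₁ h₂
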